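/- arXiv:1810.11722 — 3 statements merged into one kernel-verified Lean document; each statement's English description precedes it below -/
import Mathlib

section
/- Let Ω be an algebraically closed field and let E ⊆ A and E ⊆ B be subfields of Ω. Assume that the compositum AB (the subfield of Ω generated by A and B) is linearly disjoint over E from the relative algebraic closure of E in Ω (i.e. the extension AB/E is regular), and that A and B are linearly disjoint over E. Then (A^s + B^s) ∩ AB = A + B, where A^s and B^s denote the relative separable closures in Ω of A and of B respectively. -/
open Pointwise

/-- `S` and `T` are linearly disjoint over the subfield `E`: every finite family of
elements of `S` that is linearly independent over `E` is also linearly independent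
with coefficients taken from `T`. -/
def LinDisjOver {Ω : Type*} [Field Ω] (E : Subfield Ω) (S T : Set Ω) : Prop :=
  ∀ (n : ℕ) (a : Fin n → Ω), (∀ i, a i ∈ S) →
    (∀ c : Fin n → Ω, (∀ i, c i ∈ E) → ∑ i, c i * a i = 0 → ∀ i, c i = 0) →
    ∀ c : Fin n → Ω, (∀ i, c i ∈ T) → ∑ i, c i * a i = 0 → ∀ i, c i = 0

/-- The relative algebraic closure of a subfield `F` in `Ω`: the set of elements of `Ω`
that are algebraic over `F`. -/
def relAlgClosure {Ω : Type*} [Field Ω] (F : Subfield Ω) : Set Ω :=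
  {x : Ω | IsAlgebraic F x}

/-- The relative separable closure of a subfield `F` in `Ω`: the set of elements of `Ω`
that are separably algebraic over `F`. -/
def relSepClosure {Ω : Type*} [Field Ω] (F : Subfield Ω) : Set Ω :=
  {x : Ω | IsSeparable F x}

/-!
Let `k` be the algebraic closure of `E` in `Ω`, and `L`, `M` those of `A`, `B`. The inclusions
induce an integral map from `A ⊗[E] B`, which embeds into `Ω`, to `L ⊗[k] M`, which is a domain
because `k` is algebraically closed. In a domain integral over a subring, a nonzero ideal meets the
subring in a nonzero ideal, so `L ⊗[k] M` embeds into `Ω` too: `L` and `M` are linearly disjoint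
over `k`. Now let `a ∈ L`, `b ∈ M` and `a + b ∈ AB`. Then `a = (a + b) - b` lies in
`(Ak)M ∩ L = Ak`, and symmetrically `b ∈ Bk`. Since `AB` is linearly disjoint from `k`, it follows
that `a + b ∈ (A + B)k ∩ AB = A + B`.
-/

section TensorProduct

open scoped TensorProduct

theorem exists_algHom_apply_ne_zero {k R : Type*} [Field k] [IsAlgClosed k] [CommRing R]
    [IsReduced R] [Algebra k R] [Algebra.FiniteType k R] {r : R} (hr : r ≠ 0) :
    ∃ φ : R →ₐ[k] k, φ r ≠ 0 := by
  have : IsJacobsonRing R := isJacobsonRing_of_finiteType (A := k)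
  have hr_jacobson : r ∉ (⊥ : Ideal R).jacobson := by
    rwa [IsJacobsonRing.out ‹_› (Ideal.isRadical_bot_iff.mpr ‹_›), Ideal.mem_bot]
  obtain ⟨m, ⟨-, hm⟩, hrm⟩ : ∃ m : Ideal R, (⊥ ≤ m ∧ m.IsMaximal) ∧ r ∉ m := by
    simpa [Ideal.jacobson, Submodule.mem_sInf] using hr_jacobson
  let _ := Ideal.Quotient.field m
  have : Module.Finite k (R ⧸ m) := finite_of_finite_type_of_isJacobsonRing k (R ⧸ m)
  let e := AlgEquiv.ofBijective (Algebra.ofId k (R ⧸ m))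
    (IsAlgClosed.algebraMap_bijective_of_isIntegral (k := k) (K := R ⧸ m))
  refine ⟨e.symm.toAlgHom.comp (Ideal.Quotient.mkₐ k m), ?_⟩
  simpa [Ideal.Quotient.eq_zero_iff_mem] using hrm

theorem repr_lid_map_eq_apply_repr {k R L ι : Type*} [CommSemiring k] [CommSemiring R]
    [CommSemiring L] [Algebra k R] [Algebra k L] (φ : R →ₐ[k] k) (c : Module.Basis ι k L)
    (u : R ⊗[k] L) (i : ι) :
    c.repr (Algebra.TensorProduct.lid k L (Algebra.TensorProduct.map φ (AlgHom.id k L) u)) i =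
      φ ((Algebra.TensorProduct.basis R c).repr u i) := by
  induction u with
  | zero => simp
  | tmul r l => simp [Algebra.TensorProduct.basis_repr_tmul]
  | add u v hu hv => simp [hu, hv]

-- A product of coordinates survives a specialization `R → k`, which maps `R ⊗[k] L` to `L`.
theorem noZeroDivisors_tensorProduct_of_finiteType (k R L : Type*) [Field k] [IsAlgClosed k]
    [CommRing R] [NoZeroDivisors R] [CommRing L] [NoZeroDivisors L] [Algebra k R] [Algebra k L]
    [Algebra.FiniteType k R] : NoZeroDivisors (R ⊗[k] L) := by
  refine ⟨fun {u v} huv => ?_⟩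
  by_contra! ⟨hu, hv⟩
  let c := Module.Basis.ofVectorSpace k L
  let d := Algebra.TensorProduct.basis R c
  obtain ⟨i, hi⟩ := Finsupp.ne_iff.mp (d.repr.map_ne_zero_iff.mpr hu)
  obtain ⟨j, hj⟩ := Finsupp.ne_iff.mp (d.repr.map_ne_zero_iff.mpr hv)
  obtain ⟨φ, hφ⟩ := exists_algHom_apply_ne_zero (k := k) (mul_ne_zero hi hj)
  rw [map_mul] at hφ
  let ψ : R ⊗[k] L →ₐ[k] L :=
    (Algebra.TensorProduct.lid k L).toAlgHom.comp (Algebra.TensorProduct.map φ (AlgHom.id k L))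
  have ψ_ne_zero {w : R ⊗[k] L} {i} (hw : φ (d.repr w i) ≠ 0) : ψ w ≠ 0 := by
    contrapose! hw
    rw [← repr_lid_map_eq_apply_repr]
    exact congr(c.repr $hw i).trans (by simp)
  refine mul_ne_zero (ψ_ne_zero (left_ne_zero_of_mul hφ)) (ψ_ne_zero (right_ne_zero_of_mul hφ)) ?_
  rw [← map_mul, huv, map_zero]

theorem baseChange_mono {R B : Type*} (A : Type*) [CommSemiring R] [CommSemiring A] [Algebra R A]
    [Semiring B] [Algebra R B] {C D : Subalgebra R B} (h : C ≤ D) :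
    C.baseChange A ≤ D.baseChange A := by
  rintro _ ⟨w, rfl⟩
  refine ⟨Algebra.TensorProduct.map (AlgHom.id A A) (Subalgebra.inclusion h) w, ?_⟩
  induction w with
  | zero => simp
  | tmul => simp
  | add u v hu hv => simpa using congr($hu + $hv)

theorem isDomain_tensorProduct (k A B : Type*) [Field k] [IsAlgClosed k] [CommRing A] [IsDomain A]
    [CommRing B] [IsDomain B] [Algebra k A] [Algebra k B] : IsDomain (A ⊗[k] B) := by
  have : Nontrivial (A ⊗[k] B) :=
    (Module.FaithfullyFlat.nontrivial_tensorProduct_iff_left k A).mpr inferInstance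
  suffices NoZeroDivisors (A ⊗[k] B) from NoZeroDivisors.to_isDomain _
  refine ⟨fun {u v} huv => ?_⟩
  obtain ⟨C, hC, hu⟩ := exists_fg_and_mem_baseChange u
  obtain ⟨D, hD, hv⟩ := exists_fg_and_mem_baseChange v
  obtain ⟨u', rfl⟩ := baseChange_mono A (le_sup_left : C ≤ C ⊔ D) hu
  obtain ⟨v', rfl⟩ := baseChange_mono A (le_sup_right : D ≤ C ⊔ D) hv
  have : Algebra.FiniteType k ↥(C ⊔ D) := (C ⊔ D).fg_iff_finiteType.mp (hC.sup hD)
  have : NoZeroDivisors (A ⊗[k] ↥(C ⊔ D)) :=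
    have := noZeroDivisors_tensorProduct_of_finiteType k ↥(C ⊔ D) A
    (Algebra.TensorProduct.comm k A ↥(C ⊔ D)).injective.noZeroDivisors _ (map_zero _) (map_mul _)
  have hinj : Function.Injective (Algebra.TensorProduct.map (AlgHom.id A A) (C ⊔ D).val) :=
    Module.Flat.lTensor_preserves_injective_linearMap (M := A) (C ⊔ D).val.toLinearMap
      Subtype.val_injective
  have huv' : u' * v' = 0 := hinj (by simpa using huv)
  exact (mul_eq_zero.mp huv').imp (fun h => by simp [h]) (fun h => by simp [h])

end TensorProduct

section Integral

open Algebra.TensorProduct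
open scoped TensorProduct

theorem injective_of_injective_comp_of_isIntegral {R D S : Type*} [CommRing R] [CommRing D]
    [IsDomain D] [CommRing S] {g : R →+* D} (hg : g.IsIntegral) {f : D →+* S}
    (hfg : Function.Injective (f.comp g)) : Function.Injective f := by
  let _ := g.toAlgebra
  have : Algebra.IsIntegral R D := ⟨hg⟩
  have := g.domain_nontrivial
  rw [RingHom.injective_iff_ker_eq_bot] at hfg ⊢
  exact Ideal.eq_bot_of_comap_eq_bot (R := R) hfg

theorem isIntegral_tensorProductMap {R A B C D : Type*} [CommRing R] [CommRing A] [CommRing B]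
    [CommRing C] [CommRing D] [Algebra R A] [Algebra R B] [Algebra R C] [Algebra R D]
    {f : A →ₐ[R] C} {g : B →ₐ[R] D} (hf : f.toRingHom.IsIntegral) (hg : g.toRingHom.IsIntegral) :
    (map f g).toRingHom.IsIntegral := by
  have hleft (x : C) : (map f g).toRingHom.IsIntegralElem (x ⊗ₜ 1) := by
    have hcomp : (includeLeft : C →ₐ[R] C ⊗[R] D).comp f = (map f g).comp includeLeft := by
      ext; simp
    have h := (hf x).map (includeLeft : C →ₐ[R] C ⊗[R] D).toRingHom
    exact .of_comp (f := (includeLeft : A →ₐ[R] A ⊗[R] B).toRingHom)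
      (congr(($hcomp).toRingHom.IsIntegralElem (x ⊗ₜ 1)).mp h)
  have hright (y : D) : (map f g).toRingHom.IsIntegralElem (1 ⊗ₜ y) := by
    have hcomp : (includeRight : D →ₐ[R] C ⊗[R] D).comp g = (map f g).comp includeRight := by
      ext; simp
    have h := (hg y).map (includeRight : D →ₐ[R] C ⊗[R] D).toRingHom
    exact .of_comp (f := (includeRight : B →ₐ[R] A ⊗[R] B).toRingHom)
      (congr(($hcomp).toRingHom.IsIntegralElem (1 ⊗ₜ y)).mp h)
  intro x
  induction x with
  | zero => exact RingHom.isIntegralElem_zero _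
  | add x y hx hy => exact hx.add _ hy
  | tmul x y => simpa using (hleft x).mul _ (hright y)

theorem linearDisjoint_of_isAlgebraic {E k Ω : Type*} [Field E] [Field k] [IsAlgClosed k]
    [Field Ω] [Algebra E k] [Algebra E Ω] [Algebra k Ω] [IsScalarTower E k Ω]
    {A B : IntermediateField E Ω} {L M : IntermediateField k Ω}
    (hA : A ≤ L.restrictScalars E) (hB : B ≤ M.restrictScalars E)
    (hL : ∀ x ∈ L, IsAlgebraic A x) (hM : ∀ x ∈ M, IsAlgebraic B x) (H : A.LinearDisjoint B) :
    L.LinearDisjoint M := by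
  have := isDomain_tensorProduct k L M
  let i : A →ₐ[E] L := IntermediateField.inclusion hA
  let j : B →ₐ[E] M := IntermediateField.inclusion hB
  have hi : i.toRingHom.IsIntegral := fun x =>
    RingHom.IsIntegralElem.of_map L.val.injective (hL x x.2).isIntegral
  have hj : j.toRingHom.IsIntegral := fun x =>
    RingHom.IsIntegralElem.of_map M.val.injective (hM x x.2).isIntegral
  let q := mapOfCompatibleSMul k E E L M
  have hq : q.toRingHom.IsIntegral :=
    RingHom.isIntegral_of_surjective _ (mapOfCompatibleSMul_surjective k E E L M)
  have hcomp : (((L.toSubalgebra.mulMap M.toSubalgebra).restrictScalars E).comp q).comp (map i j) =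
      A.toSubalgebra.mulMap B.toSubalgebra := by
    ext <;> rfl
  rw [IntermediateField.linearDisjoint_iff', Subalgebra.linearDisjoint_iff_injective] at H ⊢
  rw [← hcomp] at H
  exact injective_of_injective_comp_of_isIntegral
    (f := (L.toSubalgebra.mulMap M.toSubalgebra).toRingHom)
    ((isIntegral_tensorProductMap hi hj).trans _ q.toRingHom hq) H

end Integral

section Coordinates

variable {R S : Type*} [CommRing R] [CommRing S] [Algebra R S] {K N : Subalgebra R S}

theorem exists_linearCombination_eq_of_mem_mul {ι : Type*} (c : Module.Basis ι R N)
    {P : Submodule R S} (hP : P ≤ Subalgebra.toSubmodule K) {x : S}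
    (hx : x ∈ P * Subalgebra.toSubmodule N) :
    ∃ f : ι →₀ K, Finsupp.linearCombination K (N.val ∘ c) f = x ∧ ∀ i, (f i : S) ∈ P := by
  induction hx using Submodule.mul_induction_on' with
  | mem_mul_mem p hp t ht =>
    let r := c.repr ⟨t, ht⟩
    refine ⟨r.mapRange (· • ⟨p, hP hp⟩) (zero_smul R _), ?_, fun i => P.smul_mem (r i) hp⟩
    have hrt : Finsupp.linearCombination R (N.val ∘ c) r = t := by
      rw [← N.val.coe_toLinearMap, ← Finsupp.apply_linearCombination, c.linearCombination_repr]
      rfl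
    rw [← hrt, Finsupp.linearCombination_apply, Finsupp.linearCombination_apply, Finsupp.mul_sum,
      Finsupp.sum_mapRange_index (h := fun i a => a • (N.val ∘ c) i) fun _ => zero_smul _ _]
    simp only [mul_smul_comm, Subalgebra.smul_def, smul_assoc, smul_eq_mul]
  | add x _ y _ hx hy =>
    obtain ⟨f, rfl, hf⟩ := hx
    obtain ⟨g, rfl, hg⟩ := hy
    exact ⟨f + g, map_add _ f g, fun i => add_mem (hf i) (hg i)⟩

-- The coordinates of `a * z` in a basis of `N` are `a` times those of `z`.
theorem exists_mem_mul_mem_of_mul_mem_mul [Module.Free R N] [Module.Flat R K]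
    (H : K.LinearDisjoint N) {P Q : Submodule R S} (hP : P ≤ Subalgebra.toSubmodule K)
    (hQ : Q ≤ Subalgebra.toSubmodule K) {a z : S} (ha : a ∈ K)
    (hz : z ∈ Q * Subalgebra.toSubmodule N) (hz0 : z ≠ 0)
    (haz : a * z ∈ P * Subalgebra.toSubmodule N) : ∃ q ∈ Q, q ≠ 0 ∧ a * q ∈ P := by
  let c := Module.Free.chooseBasis R N
  obtain ⟨g, rfl, hg⟩ := exists_linearCombination_eq_of_mem_mul c hQ hz
  obtain ⟨f, hfz, hf⟩ := exists_linearCombination_eq_of_mem_mul c hP haz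
  obtain ⟨i, hi⟩ := Finsupp.ne_iff.mp (ne_zero_of_map hz0)
  have hfg : f = (⟨a, ha⟩ : K) • g :=
    H.linearIndependent_right_of_flat c.linearIndependent (by rw [hfz, map_smul]; rfl)
  have hfi : (f i : S) = a * g i := by rw [hfg]; rfl
  exact ⟨g i, hg i, by simpa using hi, hfi ▸ hf i⟩

theorem mul_toSubmodule_inf_toSubmodule_eq_left {k S : Type*} [Field k] [CommRing S] [Nontrivial S]
    [Algebra k S] {K N : Subalgebra k S} (H : K.LinearDisjoint N) {P : Submodule k S}
    (hP : P ≤ Subalgebra.toSubmodule K) :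
    P * Subalgebra.toSubmodule N ⊓ Subalgebra.toSubmodule K = P := by
  refine le_antisymm ?_ (le_inf ?_ hP)
  · rintro x ⟨hx, hxK⟩
    obtain ⟨q, hq, hq0, hxq⟩ := exists_mem_mul_mem_of_mul_mem_mul H hP (Q := 1) (z := 1)
      (Submodule.one_le.mpr K.one_mem) hxK (by rw [one_mul]; exact N.one_mem) one_ne_zero
      (by rwa [mul_one])
    obtain ⟨r, rfl⟩ := Submodule.mem_one.mp hq
    have hr : r ≠ 0 := ne_zero_of_map hq0
    rwa [mul_comm, ← Algebra.smul_def, P.smul_mem_iff hr] at hxq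
  · simpa using mul_le_mul_right (Submodule.one_le.mpr N.one_mem) P

end Coordinates

section IntermediateField

variable {k Ω : Type*} [Field k] [Field Ω] [Algebra k Ω] {A L M : IntermediateField k Ω}

theorem exists_mul_mem_mul_toSubmodule_of_mem_sup {x : Ω} (hx : x ∈ A ⊔ M) :
    ∃ z ∈ Subalgebra.toSubmodule A.toSubalgebra * Subalgebra.toSubmodule M.toSubalgebra, z ≠ 0 ∧
      x * z ∈ Subalgebra.toSubmodule A.toSubalgebra * Subalgebra.toSubmodule M.toSubalgebra := by
  have hadjoin : Algebra.adjoin k (A ∪ M : Set Ω) = A.toSubalgebra ⊔ M.toSubalgebra :=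
    (Algebra.adjoin_union _ _).trans <| congr_arg₂ (· ⊔ ·)
      (Algebra.adjoin_eq A.toSubalgebra) (Algebra.adjoin_eq M.toSubalgebra)
  rw [IntermediateField.sup_def, IntermediateField.mem_adjoin_iff_div, hadjoin] at hx
  rw [Subalgebra.mul_toSubmodule]
  obtain ⟨y, hy, z, hz, rfl⟩ := hx
  rcases eq_or_ne z 0 with rfl | hz0
  · exact ⟨1, one_mem (_ : Subalgebra k Ω), one_ne_zero, by simp⟩
  · exact ⟨z, hz, hz0, by rwa [div_mul_cancel₀ _ hz0]⟩

theorem sup_inf_eq_left_of_linearDisjoint (H : L.LinearDisjoint M) (hA : A ≤ L) :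
    (A ⊔ M) ⊓ L = A := by
  refine le_antisymm ?_ (le_inf le_sup_left hA)
  rintro x ⟨hx, hxL⟩
  obtain ⟨z, hz, hz0, hxz⟩ := exists_mul_mem_mul_toSubmodule_of_mem_sup hx
  obtain ⟨q, hq, hq0, hxq⟩ := exists_mem_mul_mem_of_mul_mem_mul
    (IntermediateField.linearDisjoint_iff'.mp H) hA hA hxL hz hz0 hxz
  simpa [hq0] using A.div_mem hxq hq

end IntermediateField

section Tower

variable {E k Ω : Type*} [Field E] [Field k] [Field Ω] [Algebra E k] [Algebra E Ω] [Algebra k Ω]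
  [IsScalarTower E k Ω] {A B : IntermediateField E Ω} {L M : IntermediateField k Ω}

theorem mem_adjoin_of_add_mem_sup (H : L.LinearDisjoint M) (hA : A ≤ L.restrictScalars E)
    (hB : B ≤ M.restrictScalars E) {a b : Ω} (ha : a ∈ L) (hb : b ∈ M) (hab : a + b ∈ A ⊔ B) :
    a ∈ IntermediateField.adjoin k (A : Set Ω) := by
  let Ak := IntermediateField.adjoin k (A : Set Ω)
  have hle : A ⊔ B ≤ (Ak ⊔ M).restrictScalars E :=
    sup_le (fun _ hx => le_sup_left (a := Ak) (IntermediateField.subset_adjoin k _ hx))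
      (fun _ hx => le_sup_right (b := M) (hB hx))
  rw [← sup_inf_eq_left_of_linearDisjoint H (IntermediateField.adjoin_le_iff.mpr hA)]
  refine ⟨?_, ha⟩
  simpa using sub_mem (hle hab) (le_sup_right (b := M) hb)

end Tower

section AlgebraicClosure

variable {E Ω : Type*} [Field E] [Field Ω] [Algebra E Ω] {A B : IntermediateField E Ω}

theorem mem_mul_toSubmodule_of_mem_adjoin {k : IntermediateField E Ω} [Algebra.IsAlgebraic E k]
    {x : Ω} (hx : x ∈ IntermediateField.adjoin k (A : Set Ω)) :
    x ∈ Subalgebra.toSubmodule A.toSubalgebra * Subalgebra.toSubmodule k.toSubalgebra := by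
  rwa [← IntermediateField.mem_restrictScalars E, IntermediateField.restrictScalars_adjoin_eq_sup,
    IntermediateField.adjoin_self, sup_comm, ← IntermediateField.mem_toSubalgebra,
    IntermediateField.sup_toSubalgebra_of_isAlgebraic_right, ← Subalgebra.mem_toSubmodule,
    ← Subalgebra.mul_toSubmodule] at hx

theorem add_mem_sup_toSubmodule [IsAlgClosed (algebraicClosure E Ω)]
    (hreg : (A ⊔ B).LinearDisjoint (algebraicClosure E Ω)) (hdisj : A.LinearDisjoint B) {a b : Ω}
    (ha : IsAlgebraic A a) (hb : IsAlgebraic B b) (hab : a + b ∈ A ⊔ B) :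
    a + b ∈ Subalgebra.toSubmodule A.toSubalgebra ⊔ Subalgebra.toSubmodule B.toSubalgebra := by
  let L := IntermediateField.extendScalars (algebraicClosure.le_restrictScalars E A Ω)
  let M := IntermediateField.extendScalars (algebraicClosure.le_restrictScalars E B Ω)
  have hA : A ≤ L.restrictScalars E := fun x hx => (algebraicClosure A Ω).algebraMap_mem ⟨x, hx⟩
  have hB : B ≤ M.restrictScalars E := fun x hx => (algebraicClosure B Ω).algebraMap_mem ⟨x, hx⟩
  have hLM : L.LinearDisjoint M := linearDisjoint_of_isAlgebraic hA hB
    (fun _ => mem_algebraicClosure_iff.mp) (fun _ => mem_algebraicClosure_iff.mp) hdisj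
  have haL : a ∈ L := mem_algebraicClosure_iff.mpr ha
  have hbM : b ∈ M := mem_algebraicClosure_iff.mpr hb
  have hak := mem_mul_toSubmodule_of_mem_adjoin (mem_adjoin_of_add_mem_sup hLM hA hB haL hbM hab)
  have hbk := mem_mul_toSubmodule_of_mem_adjoin
    (mem_adjoin_of_add_mem_sup hLM.symm hB hA hbM haL (by rwa [add_comm, sup_comm]))
  rw [← mul_toSubmodule_inf_toSubmodule_eq_left (IntermediateField.linearDisjoint_iff'.mp hreg)
    (sup_le (le_sup_left : A ≤ A ⊔ B) (le_sup_right : B ≤ A ⊔ B)), Submodule.sup_mul]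
  exact ⟨Submodule.add_mem_sup hak hbk, hab⟩

end AlgebraicClosure

section Subfield

variable {Ω : Type*} [Field Ω] {E : Subfield Ω}

namespace LinDisjOver

theorem linearIndependent {S T : IntermediateField E Ω} (h : LinDisjOver E (S : Set Ω) T)
    {ι : Type*} {v : ι → S} (hv : LinearIndependent E v) :
    LinearIndependent T (fun i => (v i : Ω)) := by
  rw [linearIndependent_iff_finset_linearIndependent] at hv ⊢
  intro s
  have hvs := (hv s).map' S.val.toLinearMap (LinearMap.ker_eq_bot.mpr S.val.injective)
  rw [← linearIndependent_equiv s.equivFin.symm, Fintype.linearIndependent_iff] at hvs ⊢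
  intro g hg i
  refine Subtype.ext (h s.card _ (fun j => (v (s.equivFin.symm j)).2) (fun c hc hc0 j => ?_)
    (fun j => g j) (fun j => (g j).2) hg i)
  exact congrArg Subtype.val (hvs (fun j => ⟨c j, hc j⟩) hc0 j)

theorem linearDisjoint {S T : IntermediateField E Ω} (h : LinDisjOver E (S : Set Ω) T) :
    S.LinearDisjoint T :=
  .of_basis_left (Module.Free.chooseBasis E S)
    (h.linearIndependent (Module.Basis.linearIndependent _))

end LinDisjOver

theorem subset_relSepClosure (A : Subfield Ω) : (A : Set Ω) ⊆ relSepClosure A :=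
  fun x hx => isSeparable_algebraMap (F := A) ⟨x, hx⟩

theorem relSepClosure_subset_relAlgClosure (A : Subfield Ω) : relSepClosure A ⊆ relAlgClosure A :=
  fun _ hx => hx.isIntegral.isAlgebraic

theorem coe_algebraicClosure_eq_relAlgClosure (E : Subfield Ω) :
    (algebraicClosure E Ω : Set Ω) = relAlgClosure E :=
  Set.ext fun _ => mem_algebraicClosure_iff

end Subfield

theorem sep_add_inter_compositum_general {Ω : Type*} [Field Ω] (E A B : Subfield Ω)
    [IsAlgClosed (algebraicClosure E Ω)] (hEA : E ≤ A) (hEB : E ≤ B)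
    (hreg : LinDisjOver E ((A ⊔ B : Subfield Ω) : Set Ω) (relAlgClosure E))
    (hdisj : LinDisjOver E (A : Set Ω) (B : Set Ω)) {S T : Set Ω}
    (hAS : (A : Set Ω) ⊆ S) (hSA : S ⊆ relAlgClosure A)
    (hBT : (B : Set Ω) ⊆ T) (hTB : T ⊆ relAlgClosure B) :
    (S + T) ∩ ((A ⊔ B : Subfield Ω) : Set Ω) = (A : Set Ω) + (B : Set Ω) := by
  let A' : IntermediateField E Ω := A.toIntermediateField fun x => hEA x.2
  let B' : IntermediateField E Ω := B.toIntermediateField fun x => hEB x.2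
  have hsup : (A ⊔ B : Subfield Ω) = (A' ⊔ B').toSubfield :=
    (IntermediateField.sup_toSubfield A' B').symm
  rw [← coe_algebraicClosure_eq_relAlgClosure] at hreg
  rw [hsup] at hreg ⊢
  refine subset_antisymm ?_ (Set.subset_inter (Set.add_subset_add hAS hBT) ?_)
  · rintro _ ⟨⟨a, ha, b, hb, rfl⟩, hab⟩
    have hreg' : (A' ⊔ B').LinearDisjoint (algebraicClosure E Ω) := LinDisjOver.linearDisjoint hreg
    have hdisj' : A'.LinearDisjoint B' := LinDisjOver.linearDisjoint hdisj
    exact Submodule.mem_sup.mp (add_mem_sup_toSubmodule hreg' hdisj' (hSA ha) (hTB hb) hab)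
  · rintro _ ⟨a, ha, b, hb, rfl⟩
    exact add_mem (le_sup_left (a := A') ha) (le_sup_right (b := B') hb)

/-- Let `Ω` be an algebraically closed field and `E ⊆ A`, `E ⊆ B` subfields of `Ω`.
If the compositum `A ⊔ B` is linearly disjoint over `E` from the relative algebraic
closure of `E` in `Ω` (i.e. `AB/E` is regular), and `A` and `B` are linearly disjoint
over `E`, then `(Aˢ + Bˢ) ∩ AB = A + B`. -/
theorem sep_add_inter_compositum {Ω : Type*} [Field Ω] [IsAlgClosed Ω]
    (E A B : Subfield Ω) (hEA : E ≤ A) (hEB : E ≤ B)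
    (hreg : LinDisjOver E ((A ⊔ B : Subfield Ω) : Set Ω) (relAlgClosure E))
    (hdisj : LinDisjOver E (A : Set Ω) (B : Set Ω)) :
    (relSepClosure A + relSepClosure B) ∩ ((A ⊔ B : Subfield Ω) : Set Ω) =
      (A : Set Ω) + (B : Set Ω) :=
  have := (algebraicClosure.isAlgClosure (F := E) (E := Ω)).isAlgClosed
  sep_add_inter_compositum_general E A B hEA hEB hreg hdisj
    (subset_relSepClosure A) (relSepClosure_subset_relAlgClosure A)
    (subset_relSepClosure B) (relSepClosure_subset_relAlgClosure B)
end

section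
/- Let Ω be a field, E an algebraically closed subfield of Ω, and a, b, d ∈ Ω algebraically independent over E. Write acl(F) for the relative algebraic closure in Ω of a subfield F of Ω, and E(a), E(a,d), E(b,d) for the subfields of Ω generated over E by the indicated elements. Then a·d + b ∈ acl(E(a,d)) + acl(E(b,d)), but a·d + b ∉ acl(E(a,d)) and a·d + b ∉ acl(E(a)) + acl(E(b,d)). -/
open Pointwise

/-!
Let `K` be the relative algebraic closure of `E(b, d)`. If `a * d + b = u + v` with `u` algebraic
over `E(a)` and `v ∈ K`, then `u = d * a + (b - v)` is the value at `a` of a linear polynomial over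
`K` with leading coefficient `d`. Since `a` is transcendental over `K`, that polynomial is algebraic
over `E[X]`. A polynomial algebraic over `E[X]` has leading coefficient algebraic over `E`,
contradicting the transcendence of `d`.
-/

section LeadingCoeff

open Polynomial

attribute [local instance] Polynomial.algebra

variable {R S A : Type*} [CommRing R] [IsDomain R] [CommRing S] [Algebra R S]

theorem isAlgebraic_leadingCoeff_of_isAlgebraic {p : S[X]} (hp : IsAlgebraic R[X] p) :
    IsAlgebraic R p.leadingCoeff := by
  obtain ⟨r, hr, hrp⟩ := hp.exists_integral_multiple
  have hcoeff : (r • p).coeff (r.natDegree + p.natDegree) = r.leadingCoeff • p.leadingCoeff := by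
    rw [Algebra.smul_def, Polynomial.algebraMap_def, coe_mapRingHom,
      coeff_mul_add_eq_of_natDegree_le natDegree_map_le le_rfl, coeff_map, coeff_natDegree,
      coeff_natDegree, Algebra.smul_def]
  have hint : IsIntegral R (r.leadingCoeff • p.leadingCoeff) := hcoeff ▸ hrp.coeff _
  exact hint.isAlgebraic.of_smul (mem_nonZeroDivisors_of_ne_zero (leadingCoeff_ne_zero.mpr hr))

variable [CommRing A] [Algebra R A] [Algebra S A] [IsScalarTower R S A]

theorem isAlgebraic_leadingCoeff_of_isAlgebraic_aeval {x : A} (hx : Transcendental S x) {p : S[X]}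
    (hp : IsAlgebraic (Algebra.adjoin R {x}) (aeval x p)) : IsAlgebraic R p.leadingCoeff := by
  let f : R[X] →ₐ[R] Algebra.adjoin R {x} := aeval ⟨x, Algebra.self_mem_adjoin_singleton R x⟩
  have hfval (q : R[X]) : (f q : A) = aeval x q := by simp [f]
  have hf : Function.Surjective f := by
    rintro ⟨y, hy⟩
    obtain ⟨q, rfl⟩ := Algebra.adjoin_singleton_eq_range_aeval R x ▸ hy
    exact ⟨q, Subtype.ext (hfval q)⟩
  refine isAlgebraic_leadingCoeff_of_isAlgebraic
    (hp.of_ringHom_of_comp_eq f (aeval x) hf (transcendental_iff_injective.mp hx) ?_)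
  ext q
  · simp [f, ← IsScalarTower.algebraMap_apply]
  · simp [f]

theorem transcendental_adjoin_singleton_mul_add {x : A} {s t : S} (hx : Transcendental S x)
    (hs : Transcendental R s) :
    Transcendental (Algebra.adjoin R {x}) (x * algebraMap S A s + algebraMap S A t) := by
  have hs0 : s ≠ 0 := fun h ↦ hs (h ▸ isAlgebraic_zero)
  intro hp
  have hp' : IsAlgebraic (Algebra.adjoin R {x}) (aeval x (C s * X + C t)) := by
    simpa [mul_comm x] using hp
  exact hs (leadingCoeff_linear hs0 ▸ isAlgebraic_leadingCoeff_of_isAlgebraic_aeval hx hp')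

end LeadingCoeff

section Field

variable {E Ω : Type*} [Field E] [Field Ω] [Algebra E Ω]

variable (E) in
theorem subset_algebraicClosure_adjoin (S : Set Ω) :
    S ⊆ algebraicClosure (IntermediateField.adjoin E S) Ω := fun x hx ↦
  algebraMap_mem _ (⟨x, IntermediateField.subset_adjoin E S hx⟩ : IntermediateField.adjoin E S)

theorem transcendental_adjoin_pair {ι : Type*} {x : ι → Ω} (hx : AlgebraicIndependent E x)
    {i j k : ι} (hij : i ≠ j) (hik : i ≠ k) :
    Transcendental (IntermediateField.adjoin E {x j, x k}) (x i) := by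
  rw [IntermediateField.transcendental_adjoin_iff, ← Set.image_pair x j k]
  exact hx.transcendental_adjoin (by simp [hij, hik])

theorem mul_add_notMem_algebraicClosure_adjoin_add {K : IntermediateField E Ω} {a c d : Ω}
    (ha : Transcendental K a) (hd : Transcendental E d) (hdK : d ∈ K) (hcK : c ∈ K) :
    a * d + c ∉ (algebraicClosure (IntermediateField.adjoin E {a}) Ω : Set Ω) + (K : Set Ω) := by
  rintro ⟨u, hu, v, hv, huv⟩
  have hdK' : Transcendental E (⟨d, hdK⟩ : K) := mt IntermediateField.isAlgebraic_iff.mp hd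
  have hua : u = a * d + (c - v) := by linear_combination huv
  refine transcendental_adjoin_singleton_mul_add (t := ⟨c - v, sub_mem hcK hv⟩) ha hdK' ?_
  exact IntermediateField.isAlgebraic_adjoin_iff.mp (mem_algebraicClosure_iff.mp (hua ▸ hu))

end Field

theorem relAlgClosure_closure_union {Ω : Type*} [Field Ω] (E : Subfield Ω) (S : Set Ω) :
    relAlgClosure (Subfield.closure ((E : Set Ω) ∪ S)) =
      algebraicClosure (IntermediateField.adjoin E S) Ω := by
  have h : Subfield.closure ((E : Set Ω) ∪ S) = (IntermediateField.adjoin E S).toSubfield := by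
    rw [IntermediateField.adjoin_toSubfield]
    congr 2
    exact Subtype.range_coe.symm
  rw [h]
  ext x
  exact mem_algebraicClosure_iff.symm

theorem ad_add_b_witness_general {Ω : Type*} [Field Ω] (E : Subfield Ω) (a b d : Ω)
    (hindep : AlgebraicIndependent E ![a, b, d]) :
    a * d + b ∈
        relAlgClosure (Subfield.closure ((E : Set Ω) ∪ {a, d})) +
          relAlgClosure (Subfield.closure ((E : Set Ω) ∪ {b, d})) ∧
      a * d + b ∉ relAlgClosure (Subfield.closure ((E : Set Ω) ∪ {a, d})) ∧
      a * d + b ∉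
        relAlgClosure (Subfield.closure ((E : Set Ω) ∪ {a})) +
          relAlgClosure (Subfield.closure ((E : Set Ω) ∪ {b, d})) := by
  simp only [relAlgClosure_closure_union]
  have hbd := subset_algebraicClosure_adjoin E {b, d}
  have hd : Transcendental E d := hindep.transcendental 2
  have had : a * d ∈ algebraicClosure (IntermediateField.adjoin E {a, d}) Ω :=
    mul_mem (subset_algebraicClosure_adjoin E _ (by simp))
      (subset_algebraicClosure_adjoin E _ (by simp))
  have hb : Transcendental (IntermediateField.adjoin E {a, d}) b :=
    transcendental_adjoin_pair hindep (i := 1) (j := 0) (k := 2) (by simp) (by simp)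
  have ha : Transcendental (IntermediateField.adjoin E {b, d}) a :=
    transcendental_adjoin_pair hindep (i := 0) (j := 1) (k := 2) (by simp) (by simp)
  have haK : Transcendental (algebraicClosure (IntermediateField.adjoin E {b, d}) Ω) a :=
    ha.extendScalars _
  refine ⟨Set.add_mem_add had (hbd (by simp)), fun h ↦ ?_, ?_⟩
  · exact hb (mem_algebraicClosure_iff.mp ((add_mem_cancel_left had).mp h))
  · exact mul_add_notMem_algebraicClosure_adjoin_add
      (K := (algebraicClosure (IntermediateField.adjoin E {b, d}) Ω).restrictScalars E)
      haK hd (hbd (by simp)) (hbd (by simp))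

/-- Let `Ω` be a field, `E` an algebraically closed subfield, and `a, b, d ∈ Ω`
algebraically independent over `E`. Then `a·d + b ∈ acl(E(a,d)) + acl(E(b,d))`, but
`a·d + b ∉ acl(E(a,d))` and `a·d + b ∉ acl(E(a)) + acl(E(b,d))`. -/
theorem ad_add_b_witness {Ω : Type*} [Field Ω] (E : Subfield Ω) [IsAlgClosed E]
    (a b d : Ω) (hindep : AlgebraicIndependent (↥E) ![a, b, d]) :
    a * d + b ∈
        relAlgClosure (Subfield.closure ((E : Set Ω) ∪ {a, d})) +
          relAlgClosure (Subfield.closure ((E : Set Ω) ∪ {b, d})) ∧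
      a * d + b ∉ relAlgClosure (Subfield.closure ((E : Set Ω) ∪ {a, d})) ∧
      a * d + b ∉
        relAlgClosure (Subfield.closure ((E : Set Ω) ∪ {a})) +
          relAlgClosure (Subfield.closure ((E : Set Ω) ∪ {b, d})) :=
  ad_add_b_witness_general E a b d hindep
end

section
/- Let K be an algebraically closed field, n ≥ 1, I a prime ideal of the polynomial ring K[x₁,…,xₙ], and V = {x ∈ Kⁿ : f(x) = 0 for all f ∈ I} its zero locus. Let g ∈ K[x₁,…,xₙ] be a polynomial with g ∉ I, and let O = {x ∈ Kⁿ : g(x) ≠ 0}. Then the following are equivalent: (1) for every k ∈ ℤⁿ with k ≠ 0 and every c ∈ Kˣ, there is a point x ∈ V ∩ O with all coordinates nonzero such that x₁^{k₁}⋯xₙ^{kₙ} ≠ c; (2) for every k ∈ ℤⁿ with k ≠ 0 and every c ∈ Kˣ, there is a point x ∈ V with all coordinates nonzero such that x₁^{k₁}⋯xₙ^{kₙ} ≠ c; (3) there exist a field extension L of K and a point a ∈ Lⁿ with f(a) = 0 for all f ∈ I, g(a) ≠ 0, all coordinates aᵢ nonzero, and a multiplicatively independent over K, meaning that a₁^{k₁}⋯aₙ^{kₙ}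 ∉ K for every k ∈ ℤⁿ with k ≠ 0. -/
universe u

/-- Condition (1): for every `k ∈ ℤⁿ \ {0}` and `c ∈ Kˣ`, the quasi-affine variety
`V ∩ O` has a point with all coordinates nonzero where the Laurent monomial
`x₁^{k₁}⋯xₙ^{kₙ}` differs from `c`. -/
def NotInMonomialSetOpen {K : Type u} [Field K] {n : ℕ}
    (I : Ideal (MvPolynomial (Fin n) K)) (g : MvPolynomial (Fin n) K) : Prop :=
  ∀ k : Fin n → ℤ, k ≠ 0 → ∀ c : K, c ≠ 0 →
    ∃ x : Fin n → K, (∀ f ∈ I, MvPolynomial.eval x f = 0) ∧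
      MvPolynomial.eval x g ≠ 0 ∧ (∀ i, x i ≠ 0) ∧ (∏ i, x i ^ k i) ≠ c

/-- Condition (2): for every `k ∈ ℤⁿ \ {0}` and `c ∈ Kˣ`, the variety `V` has a point
with all coordinates nonzero where the Laurent monomial `x₁^{k₁}⋯xₙ^{kₙ}` differs
from `c`. -/
def NotInMonomialSet {K : Type u} [Field K] {n : ℕ}
    (I : Ideal (MvPolynomial (Fin n) K)) : Prop :=
  ∀ k : Fin n → ℤ, k ≠ 0 → ∀ c : K, c ≠ 0 →
    ∃ x : Fin n → K, (∀ f ∈ I, MvPolynomial.eval x f = 0) ∧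
      (∀ i, x i ≠ 0) ∧ (∏ i, x i ^ k i) ≠ c

/-- Condition (3): in some field extension `L` of `K` there is a point of `V ∩ O` with
all coordinates nonzero which is multiplicatively independent over `K`. -/
def HasMultIndepPoint {K : Type u} [Field K] {n : ℕ}
    (I : Ideal (MvPolynomial (Fin n) K)) (g : MvPolynomial (Fin n) K) : Prop :=
  ∃ (L : Type u) (_ : Field L) (φ : K →+* L) (a : Fin n → L),
    (∀ f ∈ I, MvPolynomial.eval₂ φ a f = 0) ∧ MvPolynomial.eval₂ φ a g ≠ 0 ∧
    (∀ i, a i ≠ 0) ∧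
    ∀ k : Fin n → ℤ, k ≠ 0 → (∏ i, a i ^ k i) ∉ Set.range φ

/-!
The Laurent equation `x^k = c` on the torus is the vanishing of the binomial `x^{k⁺} - c x^{k⁻}`.
Condition (2) therefore says that the prime ideal `I` contains no variable and no such binomial
with `k, c ≠ 0`, i.e. that the generic point of `V`, with coordinates in the residue field of `I`,
has nonzero coordinates and is multiplicatively independent. Conversely, at an independent point
over `L` the product of `g`, the variables and a given binomial does not vanish, so by the
Nullstellensatz it does not vanish identically on `V` either.
-/

universe v

open MvPolynomial

section LaurentBinomial

variable {σ R : Type*} [Fintype σ] [CommRing R]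

/-- The binomial `x^{k⁺} - c x^{k⁻}`, i.e. the Laurent polynomial `x^k - c` with denominators
cleared. The truncations `(k i).toNat` and `(-k i).toNat` are the positive and negative parts
of `k i`. -/
noncomputable def laurentBinomial (k : σ → ℤ) (c : R) : MvPolynomial σ R :=
  ∏ i, X i ^ (k i).toNat - C c * ∏ i, X i ^ (-k i).toNat

lemma zpow_mul_pow_toNat_neg {G : Type*} [GroupWithZero G] {a : G} (ha : a ≠ 0) (m : ℤ) :
    a ^ m * a ^ (-m).toNat = a ^ m.toNat := by
  rw [← zpow_natCast, ← zpow_natCast, ← zpow_add₀ ha]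
  congr 1
  omega

lemma eval₂_laurentBinomial_eq_zero_iff {L : Type*} [Field L] (φ : R →+* L) {a : σ → L}
    (ha : ∀ i, a i ≠ 0) (k : σ → ℤ) (c : R) :
    eval₂ φ a (laurentBinomial k c) = 0 ↔ ∏ i, a i ^ k i = φ c := by
  have clear_denominators :
      (∏ i, a i ^ k i) * ∏ i, a i ^ (-k i).toNat = ∏ i, a i ^ (k i).toNat := by
    simp_rw [← Finset.prod_mul_distrib, zpow_mul_pow_toNat_neg (ha _)]
  have denominator_ne_zero : ∏ i, a i ^ (-k i).toNat ≠ 0 :=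
    Finset.prod_ne_zero_iff.mpr fun i _ => pow_ne_zero _ (ha i)
  have eval₂_eq : eval₂ φ a (laurentBinomial k c) =
      ∏ i, a i ^ (k i).toNat - φ c * ∏ i, a i ^ (-k i).toNat := by
    simp [laurentBinomial, eval₂_prod, eval₂_pow]
  rw [eval₂_eq, ← clear_denominators, sub_eq_zero, mul_left_inj' denominator_ne_zero]

lemma eval_laurentBinomial_eq_zero_iff {K : Type*} [Field K] {x : σ → K}
    (hx : ∀ i, x i ≠ 0) (k : σ → ℤ) (c : K) :
    eval x (laurentBinomial k c) = 0 ↔ ∏ i, x i ^ k i = c :=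
  eval₂_laurentBinomial_eq_zero_iff (RingHom.id K) hx k c

end LaurentBinomial

lemma exists_field_eval₂_eq_zero_iff_mem {R : Type u} {σ : Type v} [CommRing R]
    (I : Ideal (MvPolynomial σ R)) [I.IsPrime] :
    ∃ (L : Type (max u v)) (_ : Field L) (φ : R →+* L) (a : σ → L),
      ∀ f, eval₂ φ a f = 0 ↔ f ∈ I := by
  refine ⟨I.ResidueField, inferInstance, algebraMap R I.ResidueField,
    algebraMap (MvPolynomial σ R) I.ResidueField ∘ X, fun f => ?_⟩
  rw [← aeval_def, aeval_algebraMap_apply, aeval_X_left_apply,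
    Ideal.algebraMap_residueField_eq_zero]

lemma exists_aeval_ne_zero_of_eval₂_ne_zero {k K L σ : Type*} [Field k] [Field K] [Algebra k K]
    [IsAlgClosed K] [Finite σ] [CommRing L] [IsReduced L] {I : Ideal (MvPolynomial σ k)}
    {p : MvPolynomial σ k} (φ : k →+* L) {a : σ → L} (hI : ∀ f ∈ I, eval₂ φ a f = 0)
    (hp : eval₂ φ a p ≠ 0) :
    ∃ x : σ → K, (∀ f ∈ I, aeval x f = 0) ∧ aeval x p ≠ 0 := by
  have p_notMem_radical : p ∉ I.radical := by
    rintro ⟨m, hm⟩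
    exact hp (eq_zero_of_pow_eq_zero ((eval₂_pow φ a).symm.trans (hI _ hm)))
  rw [← vanishingIdeal_zeroLocus_eq_radical (K := K), mem_vanishingIdeal_iff] at p_notMem_radical
  push Not at p_notMem_radical
  exact p_notMem_radical

section Conditions

variable {K : Type u} [Field K] {n : ℕ} {I : Ideal (MvPolynomial (Fin n) K)}
  {g : MvPolynomial (Fin n) K}

lemma NotInMonomialSetOpen.notInMonomialSet (h : NotInMonomialSetOpen I g) :
    NotInMonomialSet I := fun k hk c hc =>
  let ⟨x, hxI, _, hx, hxc⟩ := h k hk c hc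
  ⟨x, hxI, hx, hxc⟩

lemma NotInMonomialSet.X_notMem (h : NotInMonomialSet I) (i : Fin n) : X i ∉ I := by
  intro hi
  obtain ⟨x, hxI, hx, -⟩ := h (Pi.single i 1) (by simp) 1 one_ne_zero
  exact hx i ((eval_X i).symm.trans (hxI _ hi))

lemma NotInMonomialSet.laurentBinomial_notMem (h : NotInMonomialSet I) {k : Fin n → ℤ}
    (hk : k ≠ 0) {c : K} (hc : c ≠ 0) : laurentBinomial k c ∉ I := by
  intro hmem
  obtain ⟨x, hxI, hx, hxc⟩ := h k hk c hc
  exact hxc ((eval_laurentBinomial_eq_zero_iff hx k c).1 (hxI _ hmem))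

lemma NotInMonomialSet.hasMultIndepPoint [I.IsPrime] (h : NotInMonomialSet I) (hg : g ∉ I) :
    HasMultIndepPoint I g := by
  obtain ⟨L, _, φ, a, generic⟩ := exists_field_eval₂_eq_zero_iff_mem I
  have ha : ∀ i, a i ≠ 0 := fun i hi =>
    h.X_notMem i ((generic _).1 ((eval₂_X φ a i).trans hi))
  refine ⟨L, _, φ, a, fun f => (generic f).2, mt (generic g).1 hg, ha, ?_⟩
  rintro k hk ⟨c, hc⟩
  have hc₀ : c ≠ 0 := by
    rintro rfl
    rw [map_zero] at hc
    exact Finset.prod_ne_zero_iff.mpr (fun i _ => zpow_ne_zero _ (ha i)) hc.symm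
  exact h.laurentBinomial_notMem hk hc₀
    ((generic _).1 ((eval₂_laurentBinomial_eq_zero_iff φ ha k c).2 hc.symm))

lemma HasMultIndepPoint.notInMonomialSetOpen [IsAlgClosed K] (h : HasMultIndepPoint I g) :
    NotInMonomialSetOpen I g := by
  obtain ⟨L, _, φ, a, haI, hag, ha, indep⟩ := h
  intro k hk c _
  have binomial_ne_zero : eval₂ φ a (laurentBinomial k c) ≠ 0 := fun h₀ =>
    indep k hk ⟨c, ((eval₂_laurentBinomial_eq_zero_iff φ ha k c).1 h₀).symm⟩
  have product_ne_zero : eval₂ φ a (g * (∏ i, X i) * laurentBinomial k c) ≠ 0 := by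
    simp only [eval₂_mul, eval₂_prod, eval₂_X]
    exact mul_ne_zero (mul_ne_zero hag (Finset.prod_ne_zero_iff.mpr fun i _ => ha i))
      binomial_ne_zero
  obtain ⟨x, hxI, hx⟩ := exists_aeval_ne_zero_of_eval₂_ne_zero (K := K) φ haI product_ne_zero
  simp only [map_mul, map_prod, aeval_X, mul_ne_zero_iff, Finset.prod_ne_zero_iff,
    Finset.mem_univ, true_imp_iff] at hx
  obtain ⟨⟨hxg, hx₀⟩, hxb⟩ := hx
  exact ⟨x, hxI, hxg, hx₀, mt (eval_laurentBinomial_eq_zero_iff hx₀ k c).2 hxb⟩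

end Conditions

/-- Let `K` be an algebraically closed field, `n ≥ 1`, `I` a prime ideal of
`K[x₁,…,xₙ]` with zero locus `V`, and `O` the complement of the zero set of a
polynomial `g ∉ I`. Then the three conditions (1), (2), (3) above are equivalent. -/
theorem variety_monomial_tfae {K : Type u} [Field K] [IsAlgClosed K]
    {n : ℕ} (hn : 1 ≤ n) (I : Ideal (MvPolynomial (Fin n) K)) (hI : I.IsPrime)
    (g : MvPolynomial (Fin n) K) (hg : g ∉ I) :
    (NotInMonomialSetOpen I g ↔ NotInMonomialSet I) ∧
      (NotInMonomialSet I ↔ HasMultIndepPoint I g) := by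
  have open_to_closed : NotInMonomialSetOpen I g → NotInMonomialSet I :=
    NotInMonomialSetOpen.notInMonomialSet
  have closed_to_indep : NotInMonomialSet I → HasMultIndepPoint I g :=
    fun h => h.hasMultIndepPoint hg
  have indep_to_open : HasMultIndepPoint I g → NotInMonomialSetOpen I g :=
    HasMultIndepPoint.notInMonomialSetOpen
  exact ⟨⟨open_to_closed, indep_to_open ∘ closed_to_indep⟩,
    ⟨closed_to_indep, open_to_closed ∘ indep_to_open⟩⟩
end
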